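/- For every integer k ≥ 2 there exist constants c, C > 0 and N such that for every n ≥ N there exists a family Π of 2k-element subsets of [n] with the following properties: (i) every (2k−1)-element subset of [n] is contained in at most two members of Π (so Π generates a (2k−1)-dimensional pseudomanifold); (ii) c·n^{k+1/2}/ln n ≤ |Π| ≤ C·n^{k+1/2}/ln n; and (iii) n − C·√n·ln n ≤ T(Π) ≤ n − c·√n·ln n. -/

import Mathlib

/-- `S` is a transversal of the family `F` of subsets of `[n] = {1,…,n}`. -/
def IsTransversal (n : ℕ) (F : Finset (Finset ℕ)) (S : Finset ℕ) : Prop :=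
  S ⊆ Finset.Icc 1 n ∧ ∀ e ∈ F, (S ∩ e).Nonempty

/-- The transversal number of `F`. -/
noncomputable def transversalNumber (n : ℕ) (F : Finset (Finset ℕ)) : ℕ :=
  sInf {c : ℕ | ∃ S : Finset ℕ, IsTransversal n F S ∧ S.card = c}

/-!
Blocks of size `d + 1` are chosen one at a time, pairwise sharing fewer than `d` points, so that
each `d`-set lies in at most one of them. Let `S` be a set of `s ≈ √n log n` points containing no
chosen block. If few chosen blocks have `d` points in `S`, a positive proportion of the blocks
inside `S` is still available, and an average choice hits a fair share of these sets; the sets with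
many such blocks are controlled by an exponential moment. Each step shrinks the number of sets of
the first kind by a fixed factor and inflates the moment by a factor close to one, so after about
`n ^ (d / 2 + 1) / log n` steps a weighted sum of the two is below one and every `S` contains a
block. A transversal then misses fewer than `s` points of the ground set; taking the ground set to
be `[n]` without `s` points bounds the transversal number from above as well.
-/

section
open Finset Filter Asymptotics

section Blocks

variable {α : Type*} [DecidableEq α] {d s t : ℕ} {V W S : Finset α} {F : Finset (Finset α)}

theorem card_filter_powersetCard_superset_le (T V : Finset α) :
    #{e ∈ powersetCard (#T + 1) V | T ⊆ e} ≤ #V := by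
  refine (card_le_card fun e he => ?_).trans (card_image_le (f := (insert · T)))
  obtain ⟨he, hTe⟩ := mem_filter.1 he
  obtain ⟨heV, hcard⟩ := mem_powersetCard.1 he
  obtain ⟨b, -, rfl⟩ := exists_eq_insert_iff.2 ⟨hTe, hcard.symm⟩
  exact mem_image_of_mem _ (heV (mem_insert_self b T))

theorem card_filter_powersetCard_le_card_inter_le (d : ℕ) (V S : Finset α) :
    #{e ∈ powersetCard (d + 1) V | d ≤ #(e ∩ S)} ≤ (#S).choose d * #V := by
  have hcover : {e ∈ powersetCard (d + 1) V | d ≤ #(e ∩ S)} ⊆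
      (powersetCard d S).biUnion fun T => {e ∈ powersetCard (d + 1) V | T ⊆ e} := by
    intro e he
    obtain ⟨heV, hd⟩ := mem_filter.1 he
    obtain ⟨T, hT, hTd⟩ := exists_subset_card_eq hd
    exact mem_biUnion.2 ⟨T, mem_powersetCard.2 ⟨hT.trans inter_subset_right, hTd⟩,
      mem_filter.2 ⟨heV, hT.trans inter_subset_left⟩⟩
  rw [← card_powersetCard d S]
  refine (card_le_card hcover).trans (card_biUnion_le_card_mul _ _ _ fun T hT => ?_)
  rw [← (mem_powersetCard.1 hT).2]
  exact card_filter_powersetCard_superset_le T V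

/-- A partial Steiner system on `V`: a family of blocks, each a `(d + 1)`-subset of `V`, such that
any `d` points lie in at most one block. The latter is encoded by the sizes of the pairwise
intersections. -/
structure IsPartialSteiner (d : ℕ) (V : Finset α) (F : Finset (Finset α)) : Prop where
  subset_powersetCard : F ⊆ powersetCard (d + 1) V
  card_inter_lt : (F : Set (Finset α)).Pairwise fun e f => #(e ∩ f) < d

/-- The blocks on `V` that can be added to a partial Steiner system `F`. -/
def availableBlocks (d : ℕ) (V : Finset α) (F : Finset (Finset α)) : Finset (Finset α) :=
  {e ∈ powersetCard (d + 1) V | ∀ f ∈ F, #(e ∩ f) < d}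

/-- The members of `F` with at least `d` points in `S`: adding one of them can make blocks inside
`S` unavailable. -/
def nearBlocks (d : ℕ) (F : Finset (Finset α)) (S : Finset α) : Finset (Finset α) :=
  {f ∈ F | d ≤ #(f ∩ S)}

/-- The state of a set `S` that the greedy process still has a good chance to hit: `S` contains no
member of `F`, and fewer than `t` members are near `S`. -/
def IsPending (d t : ℕ) (F : Finset (Finset α)) (S : Finset α) : Prop :=
  (∀ f ∈ F, ¬ f ⊆ S) ∧ #(nearBlocks d F S) < t

protected theorem IsPartialSteiner.empty (d : ℕ) (V : Finset α) : IsPartialSteiner d V ∅ :=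
  ⟨empty_subset _, by simp⟩

theorem IsPartialSteiner.card_eq (hF : IsPartialSteiner d V F) {f : Finset α} (hf : f ∈ F) :
    #f = d + 1 :=
  (mem_powersetCard.1 (hF.subset_powersetCard hf)).2

protected theorem IsPartialSteiner.insert (hF : IsPartialSteiner d V F) {e : Finset α}
    (he : e ∈ availableBlocks d V F) : IsPartialSteiner d V (insert e F) := by
  obtain ⟨heV, hinter⟩ := mem_filter.1 he
  refine ⟨insert_subset heV hF.subset_powersetCard, ?_⟩
  rw [coe_insert]
  exact hF.card_inter_lt.insert fun f hf _ => ⟨hinter f hf, inter_comm e f ▸ hinter f hf⟩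

theorem IsPartialSteiner.eq_of_subset (hF : IsPartialSteiner d V F) {e f G : Finset α}
    (he : e ∈ F) (hf : f ∈ F) (hG : #G = d) (hGe : G ⊆ e) (hGf : G ⊆ f) : e = f := by
  by_contra hne
  exact (hF.card_inter_lt he hf hne).not_ge (hG ▸ card_le_card (subset_inter hGe hGf))

theorem notMem_of_mem_availableBlocks {e : Finset α} (he : e ∈ availableBlocks d V F) :
    e ∉ F := by
  intro heF
  obtain ⟨heV, hinter⟩ := mem_filter.1 he
  have := hinter e heF
  rw [inter_self, (mem_powersetCard.1 heV).2] at this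
  omega

/-- Inside `W`, a block `f` forbids only blocks sharing `d` points with its trace `f ∩ W`. -/
theorem choose_le_card_availableBlocks_add_sum (hWV : W ⊆ V) :
    (#W).choose (d + 1) ≤
      #{e ∈ availableBlocks d V F | e ⊆ W} + ∑ f ∈ F, (#(f ∩ W)).choose d * #W := by
  have hcover : powersetCard (d + 1) W ⊆ {e ∈ availableBlocks d V F | e ⊆ W} ∪
      F.biUnion fun f => {e ∈ powersetCard (d + 1) W | d ≤ #(e ∩ (f ∩ W))} := by
    intro e he
    obtain ⟨heW, hcard⟩ := mem_powersetCard.1 he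
    by_cases hinter : ∀ f ∈ F, #(e ∩ f) < d
    · exact mem_union_left _ (mem_filter.2 ⟨mem_filter.2
        ⟨mem_powersetCard.2 ⟨heW.trans hWV, hcard⟩, hinter⟩, heW⟩)
    · push Not at hinter
      obtain ⟨f, hf, hd⟩ := hinter
      refine mem_union_right _ (mem_biUnion.2 ⟨f, hf, mem_filter.2 ⟨he, ?_⟩⟩)
      rwa [inter_left_comm, inter_eq_left.2 heW, inter_comm]
  calc (#W).choose (d + 1) = #(powersetCard (d + 1) W) := (card_powersetCard _ _).symm
    _ ≤ _ := (card_le_card hcover).trans (card_union_le _ _)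
    _ ≤ _ := by
      gcongr
      exact card_biUnion_le.trans
        (sum_le_sum fun f _ => card_filter_powersetCard_le_card_inter_le d W (f ∩ W))

theorem card_availableBlocks_le : #(availableBlocks d V F) ≤ (#V).choose (d + 1) := by
  rw [← card_powersetCard]
  exact card_le_card (filter_subset _ _)

theorem IsPartialSteiner.choose_le_card_availableBlocks (hF : IsPartialSteiner d V F) :
    (#V).choose (d + 1) ≤ #(availableBlocks d V F) + #F * ((d + 1) * #V) := by
  refine (choose_le_card_availableBlocks_add_sum (F := F) subset_rfl).trans ?_
  gcongr
  · exact filter_subset _ _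
  · refine sum_le_card_nsmul _ _ _ fun f hf => ?_
    gcongr
    calc (#(f ∩ V)).choose d ≤ (#f).choose d := Nat.choose_mono d (card_le_card inter_subset_left)
      _ = d + 1 := by rw [hF.card_eq hf, Nat.choose_succ_self_right]

theorem IsPending.mul_card_le_card_availableBlocks (hF : IsPartialSteiner d V F)
    (ht : 2 * (t * #S) ≤ (#S).choose (d + 1)) (hSV : S ⊆ V) (hS : IsPending d t F S) :
    t * #S ≤ #{e ∈ availableBlocks d V F | e ⊆ S} := by
  have htrace : ∀ f ∈ F, (#(f ∩ S)).choose d ≤ if d ≤ #(f ∩ S) then 1 else 0 := by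
    intro f hf
    have hlt : #(f ∩ S) < d + 1 := hF.card_eq hf ▸ card_lt_card
      ⟨inter_subset_left, fun h => hS.1 f hf (h.trans inter_subset_right)⟩
    split_ifs with hd
    · exact (Nat.choose_eq_one_iff.2 (.inr (by omega))).le
    · exact (Nat.choose_eq_zero_of_lt (by omega)).le
  have hblocked : ∑ f ∈ F, (#(f ∩ S)).choose d * #S ≤ t * #S := by
    rw [← sum_mul]
    gcongr
    refine (sum_le_sum htrace).trans ?_
    rw [← card_filter]
    exact hS.2.le
  have := choose_le_card_availableBlocks_add_sum (d := d) (F := F) hSV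
  omega

theorem IsPending.of_insert {e : Finset α} (h : IsPending d t (insert e F) S) :
    IsPending d t F S ∧ ¬ e ⊆ S :=
  ⟨⟨fun f hf => h.1 f (mem_insert_of_mem hf),
    (card_le_card (filter_subset_filter _ (subset_insert e F))).trans_lt h.2⟩,
    h.1 e (mem_insert_self e F)⟩

open Classical in
/-- The number of pending `s`-subsets of `V`. -/
noncomputable def pendingCount (d s t : ℕ) (V : Finset α) (F : Finset (Finset α)) : ℕ :=
  #{S ∈ powersetCard s V | IsPending d t F S}

/-- An exponential moment of the number of near blocks, summed over the `s`-subsets of `V`; it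
controls the sets with many near blocks as in Chernoff's bound. -/
def nearWeight (d s : ℕ) (V : Finset α) (F : Finset (Finset α)) : ℕ :=
  ∑ S ∈ powersetCard s V, 2 ^ #(nearBlocks d F S)

theorem IsPartialSteiner.sum_pendingCount_insert_add_le (hF : IsPartialSteiner d V F)
    (ht : 2 * (t * s) ≤ s.choose (d + 1)) :
    ∑ e ∈ availableBlocks d V F, pendingCount d s t V (insert e F) +
      t * s * pendingCount d s t V F ≤
        #(availableBlocks d V F) * pendingCount d s t V F := by
  classical
  set A := availableBlocks d V F
  set P : Finset (Finset α) := {S ∈ powersetCard s V | IsPending d t F S} with hP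
  have hmissed : ∀ S ∈ P, #{e ∈ A | ¬ e ⊆ S} + t * s ≤ #A := by
    intro S hS
    obtain ⟨hSmem, hpending⟩ := mem_filter.1 hS
    obtain ⟨hSV, rfl⟩ := mem_powersetCard.1 hSmem
    rw [← card_filter_add_card_filter_not (s := A) (· ⊆ S), add_comm]
    gcongr
    exact hpending.mul_card_le_card_availableBlocks hF ht hSV
  have hsurvive : ∀ e ∈ A, pendingCount d s t V (insert e F) ≤ #{S ∈ P | ¬ e ⊆ S} := by
    intro e _
    rw [hP, filter_filter]
    exact card_le_card (monotone_filter_right _ fun S _ hS => hS.of_insert)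
  calc _ ≤ ∑ e ∈ A, #{S ∈ P | ¬ e ⊆ S} + t * s * #P := by
        gcongr with e he
        · exact hsurvive e he
        · exact le_rfl
    _ = ∑ S ∈ P, (#{e ∈ A | ¬ e ⊆ S} + t * s) := by
        rw [sum_add_distrib, sum_const, smul_eq_mul, mul_comm (t * s)]
        congr 1
        exact sum_card_bipartiteAbove_eq_sum_card_bipartiteBelow (s := A) (t := P)
          fun e S => ¬ e ⊆ S
    _ ≤ ∑ _S ∈ P, #A := sum_le_sum hmissed
    _ = #A * #P := by rw [sum_const, smul_eq_mul, mul_comm]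

theorem two_pow_card_nearBlocks_insert_le (d : ℕ) (F : Finset (Finset α)) (S e : Finset α) :
    2 ^ #(nearBlocks d (insert e F) S) ≤
      (1 + if d ≤ #(e ∩ S) then 1 else 0) * 2 ^ #(nearBlocks d F S) := by
  unfold nearBlocks
  rw [filter_insert]
  split_ifs
  · calc _ ≤ 2 ^ (#{f ∈ F | d ≤ #(f ∩ S)} + 1) := by gcongr; exacts [one_le_two, card_insert_le _ _]
      _ = _ := by ring
  · simp

theorem sum_nearWeight_insert_le (d s : ℕ) (V : Finset α) (F : Finset (Finset α)) :
    ∑ e ∈ availableBlocks d V F, nearWeight d s V (insert e F) ≤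
      (#(availableBlocks d V F) + s.choose d * #V) * nearWeight d s V F := by
  unfold nearWeight
  rw [sum_comm, mul_sum]
  refine sum_le_sum fun S hS => ?_
  refine (sum_le_sum fun e _ => two_pow_card_nearBlocks_insert_le d F S e).trans ?_
  rw [← sum_mul, sum_add_distrib, ← card_eq_sum_ones, ← card_filter,
    ← (mem_powersetCard.1 hS).2]
  gcongr
  refine (card_le_card ?_).trans (card_filter_powersetCard_le_card_inter_le d V S)
  exact filter_subset_filter _ (filter_subset _ _)

end Blocks

section Greedy

variable {α : Type*} [DecidableEq α] {d s t : ℕ} {V : Finset α} {F : Finset (Finset α)}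

theorem sub_le_mul_exp_neg_div {a k E : ℝ} (hk : 0 ≤ k) (hE : 0 < E) (ha : 0 ≤ a) (haE : a ≤ E) :
    a - k ≤ a * Real.exp (-(k / E)) := by
  have hfrac : a * (k / E) ≤ k := by
    rw [mul_div_left_comm]
    exact mul_le_of_le_one_right hk (div_le_one_of_le₀ haE hE.le)
  have := mul_le_mul_of_nonneg_left (Real.add_one_le_exp (-(k / E))) ha
  linarith

theorem add_le_mul_exp_two_mul_div {a D E : ℝ} (hD : 0 ≤ D) (hE : 0 < E) (hEa : E ≤ 2 * a) :
    a + D ≤ a * Real.exp (2 * D / E) := by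
  have hfrac : D ≤ a * (2 * D / E) := by
    rw [mul_div_assoc', le_div_iff₀ hE]
    nlinarith
  have := mul_le_mul_of_nonneg_left (Real.add_one_le_exp (2 * D / E)) (by linarith : 0 ≤ a)
  linarith

/-- The block is chosen by averaging the combined potential over all available blocks. -/
theorem IsPartialSteiner.exists_potential_insert_le (hF : IsPartialSteiner d V F)
    (hV : d + 1 ≤ #V) (hcard : 2 * (#F * ((d + 1) * #V)) ≤ (#V).choose (d + 1))
    (ht : 2 * (t * s) ≤ s.choose (d + 1)) {u v : ℝ} (hu : 0 ≤ u) (hv : 0 ≤ v) :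
    ∃ e ∈ availableBlocks d V F,
      u * pendingCount d s t V (insert e F) + v * nearWeight d s V (insert e F) ≤
        u * Real.exp (-(t * s / (#V).choose (d + 1))) * pendingCount d s t V F +
        v * Real.exp (2 * (s.choose d * #V) / (#V).choose (d + 1)) * nearWeight d s V F := by
  set A := availableBlocks d V F
  set E := (#V).choose (d + 1)
  have hE : 0 < E := Nat.choose_pos hV
  have hAE : #A ≤ E := card_availableBlocks_le
  have hEA : E ≤ 2 * #A := by
    have : E ≤ #A + #F * ((d + 1) * #V) := hF.choose_le_card_availableBlocks
    omega
  refine exists_le_of_sum_le (card_pos.1 (by omega : 0 < #A)) ?_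
  have hpending : ∑ e ∈ A, (pendingCount d s t V (insert e F) : ℝ) ≤
      #A * Real.exp (-(t * s / E)) * pendingCount d s t V F := by
    have hsum : ∑ e ∈ A, (pendingCount d s t V (insert e F) : ℝ) +
        t * s * pendingCount d s t V F ≤ #A * pendingCount d s t V F :=
      mod_cast hF.sum_pendingCount_insert_add_le ht
    have hfactor : (#A : ℝ) - t * s ≤ #A * Real.exp (-(t * s / E)) :=
      sub_le_mul_exp_neg_div (by positivity) (mod_cast hE) (by positivity) (mod_cast hAE)
    calc _ ≤ (#A - t * s : ℝ) * pendingCount d s t V F := by linarith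
      _ ≤ _ := by gcongr
  have hnear : ∑ e ∈ A, (nearWeight d s V (insert e F) : ℝ) ≤
      #A * Real.exp (2 * (s.choose d * #V) / E) * nearWeight d s V F := by
    have hsum : ∑ e ∈ A, (nearWeight d s V (insert e F) : ℝ) ≤
        (#A + s.choose d * #V) * nearWeight d s V F :=
      mod_cast sum_nearWeight_insert_le d s V F
    refine hsum.trans ?_
    gcongr
    exact add_le_mul_exp_two_mul_div (by positivity) (mod_cast hE) (mod_cast hEA)
  rw [sum_add_distrib, ← mul_sum, ← mul_sum, sum_const, nsmul_eq_mul]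
  calc _ ≤ u * (#A * Real.exp (-(t * s / E)) * pendingCount d s t V F) +
        v * (#A * Real.exp (2 * (s.choose d * #V) / E) * nearWeight d s V F) := by gcongr
    _ = _ := by ring

theorem exists_isPartialSteiner_potential_le (hV : d + 1 ≤ #V)
    (ht : 2 * (t * s) ≤ s.choose (d + 1)) (m : ℕ)
    (hm : 2 * (m * ((d + 1) * #V)) ≤ (#V).choose (d + 1)) {u v : ℝ} (hu : 0 ≤ u) (hv : 0 ≤ v) :
    ∃ F : Finset (Finset α), IsPartialSteiner d V F ∧ #F = m ∧
      u * pendingCount d s t V F + v * nearWeight d s V F ≤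
        u * Real.exp (-(t * s / (#V).choose (d + 1))) ^ m * (#V).choose s +
        v * Real.exp (2 * (s.choose d * #V) / (#V).choose (d + 1)) ^ m * (#V).choose s := by
  induction m generalizing u v with
  | zero =>
    classical
    refine ⟨∅, .empty d V, card_empty, ?_⟩
    have hpending : pendingCount d s t V ∅ ≤ (#V).choose s :=
      (card_le_card (filter_subset _ _)).trans (card_powersetCard s V).le
    have hnear : nearWeight d s V ∅ = (#V).choose s := by simp [nearWeight, nearBlocks]
    rw [hnear, pow_zero, pow_zero, mul_one, mul_one]
    gcongr
  | succ m ih =>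
    have hm' : 2 * (m * ((d + 1) * #V)) ≤ (#V).choose (d + 1) := le_trans (by gcongr; omega) hm
    obtain ⟨F, hF, rfl, hpot⟩ := ih hm'
      (mul_nonneg hu (Real.exp_pos (-(t * s / (#V).choose (d + 1)))).le)
      (mul_nonneg hv (Real.exp_pos (2 * (s.choose d * #V) / (#V).choose (d + 1))).le)
    obtain ⟨e, he, hle⟩ := hF.exists_potential_insert_le hV hm' ht hu hv
    refine ⟨insert e F, hF.insert he,
      card_insert_of_notMem (notMem_of_mem_availableBlocks he), hle.trans (hpot.trans_eq ?_)⟩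
    ring

theorem exists_subset_of_pendingCount_of_nearWeight (hpending : pendingCount d s t V F = 0)
    (hnear : nearWeight d s V F < 2 ^ t) :
    ∀ S ∈ powersetCard s V, ∃ e ∈ F, e ⊆ S := by
  classical
  intro S hS
  by_contra! hmiss
  refine filter_eq_empty_iff.1 (card_eq_zero.1 hpending) hS ⟨hmiss, ?_⟩
  refine (Nat.pow_lt_pow_iff_right one_lt_two).1 (lt_of_le_of_lt ?_ hnear)
  exact single_le_sum (f := fun S => 2 ^ #(nearBlocks d F S)) (fun _ _ => Nat.zero_le _) hS

theorem exists_isPartialSteiner_forall_exists_subset {m : ℕ} (hV : d + 1 ≤ #V)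
    (ht : 2 * (t * s) ≤ s.choose (d + 1))
    (hm : 2 * (m * ((d + 1) * #V)) ≤ (#V).choose (d + 1))
    (hlt : (#V).choose s * (Real.exp (-(t * s / (#V).choose (d + 1))) ^ m +
      Real.exp (2 * (s.choose d * #V) / (#V).choose (d + 1)) ^ m / 2 ^ t) < 1) :
    ∃ F : Finset (Finset α), IsPartialSteiner d V F ∧ #F = m ∧
      ∀ S ∈ powersetCard s V, ∃ e ∈ F, e ⊆ S := by
  obtain ⟨F, hF, hcard, hpot⟩ := exists_isPartialSteiner_potential_le hV ht m hm
    zero_le_one (by positivity : (0 : ℝ) ≤ 1 / 2 ^ t)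
  have hpot_lt : (pendingCount d s t V F : ℝ) + nearWeight d s V F / 2 ^ t < 1 := by
    calc _ = 1 * (pendingCount d s t V F : ℝ) + 1 / 2 ^ t * nearWeight d s V F := by ring
      _ ≤ _ := hpot
      _ = _ := by ring
      _ < 1 := hlt
  refine ⟨F, hF, hcard, exists_subset_of_pendingCount_of_nearWeight (d := d) (t := t) ?_ ?_⟩
  · have : (0 : ℝ) ≤ nearWeight d s V F / 2 ^ t := by positivity
    exact Nat.lt_one_iff.1 (by exact_mod_cast (by linarith : (pendingCount d s t V F : ℝ) < 1))
  · have : (0 : ℝ) ≤ pendingCount d s t V F := by positivity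
    have : (nearWeight d s V F : ℝ) / 2 ^ t < 1 := by linarith
    rw [div_lt_one (by positivity)] at this
    exact_mod_cast this

end Greedy

section Asymptotics

variable {d : ℕ} {A : ℝ}

/-- The size, of order `√n log n`, of the sets that are required to contain a block. -/
noncomputable def targetSize (n : ℕ) : ℕ := ⌊√n * Real.log n⌋₊

/-- The number of blocks, about `A * n ^ (d / 2 + 1) / log n`. -/
noncomputable def blockCount (A : ℝ) (d n : ℕ) : ℕ := ⌊A * √n ^ (d + 2) / Real.log n⌋₊

theorem eventually_le_log_natCast (B : ℝ) : ∀ᶠ n : ℕ in atTop, B ≤ Real.log n :=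
  (Real.tendsto_log_atTop.comp tendsto_natCast_atTop_atTop).eventually_ge_atTop B

theorem eventually_mul_log_natCast_le_sqrt (B : ℝ) :
    ∀ᶠ n : ℕ in atTop, B * Real.log n ≤ √n := by
  have hlittle : (fun n : ℕ => B * Real.log n) =o[atTop] fun n : ℕ => √n := by
    simp only [Real.sqrt_eq_rpow]
    exact ((isLittleO_log_rpow_atTop one_half_pos).const_mul_left B).comp_tendsto
      tendsto_natCast_atTop_atTop
  filter_upwards [hlittle.bound one_pos] with n hn
  rw [one_mul, Real.norm_of_nonneg (Real.sqrt_nonneg _)] at hn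
  exact (Real.le_norm_self _).trans hn

theorem targetSize_le (n : ℕ) : (targetSize n : ℝ) ≤ √n * Real.log n :=
  Nat.floor_le (by positivity)

theorem eventually_one_le_sqrt_mul_log : ∀ᶠ n : ℕ in atTop, 1 ≤ √n * Real.log n := by
  filter_upwards [eventually_le_log_natCast 1, eventually_mul_log_natCast_le_sqrt 1] with n hL hx
  nlinarith

theorem eventually_half_le_targetSize :
    ∀ᶠ n : ℕ in atTop, √n * Real.log n / 2 ≤ targetSize n := by
  filter_upwards [eventually_one_le_sqrt_mul_log] with n hn
  exact (Nat.div_two_lt_floor hn).le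

theorem eventually_mul_log_le_targetSize (B : ℝ) :
    ∀ᶠ n : ℕ in atTop, B * Real.log n ≤ targetSize n := by
  filter_upwards [eventually_half_le_targetSize, eventually_le_log_natCast 1,
    eventually_mul_log_natCast_le_sqrt (2 * |B|)] with n hs hL hx
  refine le_trans ?_ hs
  have : 2 * B ≤ √n := by nlinarith [le_abs_self B, abs_nonneg B]
  nlinarith

theorem tendsto_targetSize_atTop : Tendsto targetSize atTop atTop := by
  rw [← tendsto_natCast_atTop_iff (R := ℝ), tendsto_atTop]
  intro B
  filter_upwards [eventually_mul_log_le_targetSize |B|, eventually_le_log_natCast 1] with n hs hL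
  nlinarith [le_abs_self B, abs_nonneg B]

theorem eventually_two_mul_targetSize_le : ∀ᶠ n : ℕ in atTop, 2 * targetSize n ≤ n := by
  filter_upwards [eventually_mul_log_natCast_le_sqrt 2] with n hx
  have hsq : √(n : ℝ) ^ 2 = n := Real.sq_sqrt n.cast_nonneg
  have : (2 * targetSize n : ℝ) ≤ n := by nlinarith [targetSize_le n, Real.sqrt_nonneg (n : ℝ)]
  exact_mod_cast this

theorem blockCount_le (hA : 0 ≤ A) (d n : ℕ) :
    (blockCount A d n : ℝ) ≤ A * √n ^ (d + 2) / Real.log n :=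
  Nat.floor_le (by positivity)

theorem eventually_half_le_blockCount (hA : 0 < A) (d : ℕ) :
    ∀ᶠ n : ℕ in atTop, A * √n ^ (d + 2) / Real.log n / 2 ≤ blockCount A d n := by
  filter_upwards [eventually_le_log_natCast 1, eventually_mul_log_natCast_le_sqrt 1,
    eventually_mul_log_natCast_le_sqrt A⁻¹] with n hL hx hAx
  refine (Nat.div_two_lt_floor ?_).le
  rw [inv_mul_le_iff₀ hA] at hAx
  rw [one_le_div (by linarith)]
  calc Real.log n ≤ A * √n := hAx
    _ ≤ A * √n ^ (d + 2) := by
      gcongr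
      exact le_self_pow₀ (by linarith) (by omega)

theorem exists_mul_pow_le_choose (r : ℕ) :
    ∃ c : ℝ, 0 < c ∧ ∀ᶠ m : ℕ in atTop, c * (m : ℝ) ^ r ≤ m.choose r := by
  obtain ⟨c, hc, hle⟩ := (isTheta_choose r).2.exists_pos
  refine ⟨c⁻¹, inv_pos.2 hc, hle.bound.mono fun m hm => ?_⟩
  rw [inv_mul_le_iff₀ hc]
  simpa only [norm_pow, RCLike.norm_natCast] using hm

theorem exists_two_mul_le_choose_and_mul_pow_le (hd : 0 < d) :
    ∃ κ : ℝ, 0 < κ ∧ ∀ᶠ s : ℕ in atTop, ∃ t : ℕ,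
      2 * (t * s) ≤ s.choose (d + 1) ∧ κ * (s : ℝ) ^ d ≤ t := by
  obtain ⟨c, hc, hchoose⟩ := exists_mul_pow_le_choose (d + 1)
  refine ⟨c / 4, by positivity, ?_⟩
  have hlarge : ∀ᶠ s : ℕ in atTop, 2 / c ≤ (s : ℝ) ^ d :=
    ((tendsto_pow_atTop hd.ne').comp tendsto_natCast_atTop_atTop).eventually_ge_atTop _
  filter_upwards [hchoose, hlarge] with s hs hlarge
  refine ⟨⌊c / 2 * (s : ℝ) ^ d⌋₊, ?_, ?_⟩
  · have hfloor : (⌊c / 2 * (s : ℝ) ^ d⌋₊ : ℝ) ≤ c / 2 * (s : ℝ) ^ d :=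
      Nat.floor_le (by positivity)
    have : 2 * (⌊c / 2 * (s : ℝ) ^ d⌋₊ * s : ℝ) ≤ s.choose (d + 1) := by
      calc _ ≤ 2 * (c / 2 * (s : ℝ) ^ d * s) := by gcongr
        _ = c * (s : ℝ) ^ (d + 1) := by ring
        _ ≤ _ := hs
    exact_mod_cast this
  · rw [div_le_iff₀' hc] at hlarge
    have := Nat.div_two_lt_floor (by linarith : 1 ≤ c / 2 * (s : ℝ) ^ d)
    linarith

theorem eventually_blockCount_mul_le_mul_choose (hd : 2 ≤ d) (hA : 0 ≤ A) {ε : ℝ} (hε : 0 < ε) :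
    ∀ᶠ n : ℕ in atTop, ∀ v : ℕ, n ≤ 2 * v →
      (blockCount A d n : ℝ) * n ≤ ε * v.choose (d + 1) := by
  obtain ⟨c, hc, hchoose⟩ := exists_mul_pow_le_choose (d + 1)
  obtain ⟨v₀, hv₀⟩ := eventually_atTop.1 hchoose
  filter_upwards [eventually_ge_atTop (2 * v₀), eventually_ge_atTop 1,
    eventually_le_log_natCast (max 1 (A * 2 ^ (d + 1) / (ε * c)))] with n hn hn1 hL v hnv
  obtain ⟨hL1, hL⟩ := max_le_iff.1 hL
  have hx1 : 1 ≤ √(n : ℝ) := Real.one_le_sqrt.2 (mod_cast hn1)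
  have hsq : √(n : ℝ) ^ 2 = n := Real.sq_sqrt n.cast_nonneg
  have hnv' : (n : ℝ) ≤ 2 * v := mod_cast hnv
  rw [div_le_iff₀ (by positivity)] at hL
  calc (blockCount A d n : ℝ) * n ≤ A * √n ^ (d + 2) / Real.log n * √n ^ 2 := by
        rw [hsq]
        gcongr
        exact blockCount_le hA d n
    _ = A / Real.log n * √n ^ (d + 4) := by ring
    _ ≤ A / Real.log n * √n ^ (2 * (d + 1)) := by
        gcongr
        omega
    _ = A / Real.log n * (n : ℝ) ^ (d + 1) := by rw [pow_mul, hsq]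
    _ ≤ A / Real.log n * (2 * v) ^ (d + 1) := by gcongr
    _ = A * 2 ^ (d + 1) / Real.log n * (v : ℝ) ^ (d + 1) := by ring
    _ ≤ ε * c * (v : ℝ) ^ (d + 1) := by
        gcongr
        rw [div_le_iff₀ (by linarith)]
        linarith
    _ = ε * (c * (v : ℝ) ^ (d + 1)) := by ring
    _ ≤ ε * v.choose (d + 1) := by
        gcongr
        exact hv₀ v (by omega)

/-- The number of pending sets decays at rate `t * s / v.choose (d + 1)` per block, and
`exp (s * log n)` bounds its initial value. -/
theorem eventually_le_hit_exponent {κ : ℝ} (hd : 2 ≤ d) (hA : 0 < A) (hκ : 2 ^ (d + 2) ≤ κ * A) :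
    ∀ᶠ n : ℕ in atTop, ∀ v t : ℕ, d + 1 ≤ v → v ≤ n → κ * (targetSize n : ℝ) ^ d ≤ t →
      targetSize n * Real.log n + 1 ≤
        t * targetSize n / v.choose (d + 1) * blockCount A d n := by
  filter_upwards [eventually_le_log_natCast 1, eventually_half_le_targetSize,
    eventually_mul_log_le_targetSize 1, eventually_half_le_blockCount hA d]
    with n hL hs hsL hm v t hdv hvn ht
  have hκ0 : 0 < κ := pos_of_mul_pos_left (lt_of_lt_of_le (by positivity) hκ) hA.le
  set x := √(n : ℝ)
  set L := Real.log n
  set s : ℝ := (targetSize n : ℝ)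
  have : 0 < L := by linarith
  have hchoose : (v.choose (d + 1) : ℝ) ≤ x ^ (2 * (d + 1)) := by
    rw [pow_mul, Real.sq_sqrt n.cast_nonneg]
    exact_mod_cast (Nat.choose_le_pow v (d + 1)).trans (Nat.pow_le_pow_left hvn _)
  have hLd : L ≤ L ^ (d - 1) := le_self_pow₀ hL (by omega)
  have hsucc : L ^ d = L ^ (d - 1) * L := by rw [← pow_succ]; congr 1; omega
  rw [div_mul_eq_mul_div, le_div_iff₀ (mod_cast Nat.choose_pos hdv)]
  calc (s * L + 1) * v.choose (d + 1) ≤ 2 * (s * L) * x ^ (2 * (d + 1)) := by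
        gcongr
        nlinarith
    _ = 2 ^ (d + 2) / 2 ^ (d + 1) * s * L * x ^ (2 * (d + 1)) := by
        rw [pow_succ 2 (d + 1)]
        field_simp
    _ ≤ κ * A / 2 ^ (d + 1) * s * L ^ (d - 1) * x ^ (2 * (d + 1)) := by gcongr
    _ = κ * (x * L / 2) ^ d * s * (A * x ^ (d + 2) / L / 2) := by
        rw [div_pow, mul_pow, hsucc]
        field_simp
        ring
    _ ≤ κ * s ^ d * s * blockCount A d n := by gcongr
    _ ≤ t * s * blockCount A d n := by gcongr

theorem eventually_near_exponent_le {κ : ℝ} (hd : 2 ≤ d) (hA : 0 ≤ A) (hκ : 0 < κ) :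
    ∀ᶠ n : ℕ in atTop, ∀ v t : ℕ, d + 1 ≤ v → n ≤ 2 * v → v ≤ n →
      κ * (targetSize n : ℝ) ^ d ≤ t →
      2 * ((targetSize n).choose d * v) / v.choose (d + 1) * blockCount A d n +
        targetSize n * Real.log n + 1 ≤ (t / 2 : ℝ) := by
  filter_upwards [eventually_le_log_natCast 1, eventually_mul_log_le_targetSize 1,
    eventually_mul_log_le_targetSize (8 / κ),
    eventually_blockCount_mul_le_mul_choose hd hA (by positivity : 0 < κ / 8)]
    with n hL hsL hκs hm v t hdv hnv hvn ht
  set L := Real.log n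
  have hD : ((targetSize n).choose d * v : ℝ) ≤ targetSize n ^ d * n := by
    gcongr
    exact_mod_cast Nat.choose_le_pow (targetSize n) d
  set s : ℝ := (targetSize n : ℝ)
  have hs1 : 1 ≤ s := by linarith
  have hnear : 2 * ((targetSize n).choose d * v) / v.choose (d + 1) * blockCount A d n ≤
      κ / 4 * s ^ d := by
    rw [div_mul_eq_mul_div, div_le_iff₀ (mod_cast Nat.choose_pos hdv)]
    calc _ ≤ 2 * (s ^ d * n) * blockCount A d n := by gcongr
      _ = 2 * s ^ d * (blockCount A d n * n) := by ring
      _ ≤ 2 * s ^ d * (κ / 8 * v.choose (d + 1)) :=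
        mul_le_mul_of_nonneg_left (hm v hnv) (by positivity)
      _ = _ := by ring
  have hlog : s * L + 1 ≤ κ / 4 * s ^ d := by
    rw [div_mul_eq_mul_div, div_le_iff₀ hκ] at hκs
    calc s * L + 1 ≤ 2 * (s * L) := by nlinarith
      _ ≤ κ / 4 * s ^ 2 := by nlinarith
      _ ≤ κ / 4 * s ^ d := by gcongr
  linarith

theorem choose_le_exp_mul_log {n v : ℕ} (hn : 0 < n) (hvn : v ≤ n) (s : ℕ) :
    (v.choose s : ℝ) ≤ Real.exp (s * Real.log n) := by
  rw [Real.exp_nat_mul, Real.exp_log (mod_cast hn)]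
  exact_mod_cast (Nat.choose_le_pow v s).trans (Nat.pow_le_pow_left hvn s)

theorem inv_two_pow_le_exp (t : ℕ) : (2 ^ t : ℝ)⁻¹ ≤ Real.exp (-(t / 2)) := by
  rw [Real.exp_neg, ← Real.exp_log (show (0 : ℝ) < 2 ^ t by positivity), Real.log_pow]
  gcongr
  nlinarith [Real.log_two_gt_d9, (Nat.cast_nonneg t : (0 : ℝ) ≤ t)]

theorem mul_exp_add_exp_div_two_pow_lt_one {w u p q : ℝ} {t : ℕ} (hw : w ≤ Real.exp u)
    (hp : u + 1 ≤ p) (hq : q + u + 1 ≤ t / 2) :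
    w * (Real.exp (-p) + Real.exp q / 2 ^ t) < 1 := by
  have hexp : Real.exp (-1) < 1 / 2 := by
    linarith [Real.exp_neg_one_lt_d9]
  calc w * (Real.exp (-p) + Real.exp q / 2 ^ t) ≤
        Real.exp u * (Real.exp (-p) + Real.exp q * Real.exp (-(t / 2))) := by
        rw [div_eq_mul_inv]
        gcongr
        exact inv_two_pow_le_exp t
    _ = Real.exp (u - p) + Real.exp (u + q - t / 2) := by
        simp only [sub_eq_add_neg, Real.exp_add]
        ring
    _ ≤ Real.exp (-1) + Real.exp (-1) := by gcongr <;> linarith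
    _ < 1 := by linarith

theorem eventually_exists_isPartialSteiner {α : Type*} [DecidableEq α] (hd : 2 ≤ d) :
    ∀ᶠ A : ℝ in atTop, ∀ᶠ n : ℕ in atTop, ∀ V : Finset α, n ≤ 2 * #V → #V ≤ n →
      ∃ F : Finset (Finset α), IsPartialSteiner d V F ∧ #F = blockCount A d n ∧
        ∀ S ∈ powersetCard (targetSize n) V, ∃ e ∈ F, e ⊆ S := by
  obtain ⟨κ, hκ, hthreshold⟩ := exists_two_mul_le_choose_and_mul_pow_le (by omega : 0 < d)
  filter_upwards [eventually_gt_atTop 0, eventually_ge_atTop (2 ^ (d + 2) / κ)] with A hA hκA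
  rw [div_le_iff₀' hκ] at hκA
  have hblocks := eventually_blockCount_mul_le_mul_choose hd hA.le
    (by positivity : (0 : ℝ) < 1 / (2 * (d + 1)))
  filter_upwards [eventually_ge_atTop (2 * (d + 1)), tendsto_targetSize_atTop.eventually hthreshold,
    hblocks, eventually_le_hit_exponent hd hA hκA, eventually_near_exponent_le hd hA.le hκ]
    with n hn hthreshold hblocks hhit hnear V hnV hVn
  obtain ⟨t, ht, hκt⟩ := hthreshold
  have hdV : d + 1 ≤ #V := by omega
  have hroom : 2 * (blockCount A d n * ((d + 1) * #V)) ≤ (#V).choose (d + 1) := by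
    have hle : (blockCount A d n * n : ℝ) * (2 * (d + 1)) ≤ (#V).choose (d + 1) := by
      rw [← le_div_iff₀ (by positivity)]
      exact (hblocks #V hnV).trans_eq (by ring)
    have hVn' : (#V : ℝ) ≤ n := mod_cast hVn
    have : 2 * (blockCount A d n * ((d + 1) * #V) : ℝ) ≤ (#V).choose (d + 1) :=
      calc _ ≤ 2 * (blockCount A d n * ((d + 1) * n) : ℝ) := by gcongr
        _ ≤ _ := by linarith
    exact_mod_cast this
  refine exists_isPartialSteiner_forall_exists_subset hdV ht hroom ?_
  rw [← Real.exp_nat_mul, ← Real.exp_nat_mul, mul_neg, mul_comm (blockCount A d n : ℝ),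
    mul_comm (blockCount A d n : ℝ)]
  exact mul_exp_add_exp_div_two_pow_lt_one (choose_le_exp_mul_log (by omega) hVn _)
    (hhit #V t hdV hVn hκt) (hnear #V t hdV hnV hVn hκt)

end Asymptotics

section Transversals

variable {n : ℕ} {F : Finset (Finset ℕ)}

theorem transversalNumber_le {S : Finset ℕ} (hS : IsTransversal n F S) :
    transversalNumber n F ≤ #S :=
  Nat.sInf_le ⟨S, hS, rfl⟩

theorem IsTransversal.exists_card_eq_transversalNumber {S : Finset ℕ}
    (hS : IsTransversal n F S) : ∃ T, IsTransversal n F T ∧ #T = transversalNumber n F :=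
  Nat.sInf_mem (s := {c | ∃ T, IsTransversal n F T ∧ #T = c}) ⟨_, S, hS, rfl⟩

theorem IsTransversal.card_lt_transversalNumber_add {V : Finset ℕ} {s : ℕ}
    (hV : IsTransversal n F V) (hs : ∀ S ∈ powersetCard s V, ∃ e ∈ F, e ⊆ S) :
    #V < transversalNumber n F + s := by
  obtain ⟨T, hT, hcard⟩ := hV.exists_card_eq_transversalNumber
  by_contra! hle
  obtain ⟨S, hSV, hSs⟩ : ∃ S ⊆ V \ T, #S = s :=
    exists_subset_card_eq (by have := le_card_sdiff T V; omega)
  obtain ⟨e, he, heS⟩ := hs S (mem_powersetCard.2 ⟨hSV.trans sdiff_subset, hSs⟩)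
  obtain ⟨y, hy⟩ := hT.2 e he
  exact (mem_sdiff.1 (hSV (heS (mem_inter.1 hy).2))).2 (mem_inter.1 hy).1

theorem IsPartialSteiner.isTransversal {d : ℕ} {V : Finset ℕ} (hF : IsPartialSteiner d V F)
    (hV : V ⊆ Finset.Icc 1 n) : IsTransversal n F V := by
  refine ⟨hV, fun e he => ?_⟩
  rw [inter_eq_right.2 (mem_powersetCard.1 (hF.subset_powersetCard he)).1, ← card_pos,
    hF.card_eq he]
  exact d.succ_pos

theorem IsPartialSteiner.transversalNumber_add_le {d s : ℕ}
    (hF : IsPartialSteiner d (Icc (s + 1) n) F) (hs : s ≤ n) : transversalNumber n F + s ≤ n := by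
  have := transversalNumber_le (hF.isTransversal (Icc_subset_Icc_left (by omega)))
  rw [Nat.card_Icc] at this
  omega

theorem IsPartialSteiner.le_transversalNumber_add {d s : ℕ}
    (hF : IsPartialSteiner d (Icc (s + 1) n) F)
    (hcover : ∀ S ∈ powersetCard s (Icc (s + 1) n), ∃ e ∈ F, e ⊆ S) :
    n ≤ transversalNumber n F + 2 * s := by
  have := (hF.isTransversal (Icc_subset_Icc_left (by omega))).card_lt_transversalNumber_add hcover
  rw [Nat.card_Icc] at this
  omega

end Transversals

theorem natCast_rpow_half_add_one (n d : ℕ) :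
    (n : ℝ) ^ ((d : ℝ) / 2 + 1) = √n ^ (d + 2) := by
  rw [Real.sqrt_eq_rpow, ← Real.rpow_natCast, ← Real.rpow_mul n.cast_nonneg]
  congr 1
  push_cast
  ring

theorem stmt_9_general (d : ℕ) (hd : 2 ≤ d) :
    ∃ c C : ℝ, 0 < c ∧ 0 < C ∧ ∃ N : ℕ, ∀ n : ℕ, N ≤ n →
      ∃ P : Finset (Finset ℕ),
        (∀ e ∈ P, e ⊆ Icc 1 n ∧ #e = d + 1) ∧
        (∀ G : Finset ℕ, #G = d → ∀ e₁ ∈ P, ∀ e₂ ∈ P, G ⊆ e₁ → G ⊆ e₂ → e₁ = e₂) ∧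
        c * (n : ℝ) ^ ((d : ℝ) / 2 + 1) / Real.log n ≤ #P ∧
        (#P : ℝ) ≤ C * (n : ℝ) ^ ((d : ℝ) / 2 + 1) / Real.log n ∧
        n - C * √n * Real.log n ≤ transversalNumber n P ∧
        (transversalNumber n P : ℝ) ≤ n - c * √n * Real.log n := by
  obtain ⟨A, hP, hA⟩ :=
    ((eventually_exists_isPartialSteiner (α := ℕ) hd).and (eventually_ge_atTop 2)).exists
  obtain ⟨N, hN⟩ := eventually_atTop.1 (hP.and (eventually_two_mul_targetSize_le.and
    (eventually_half_le_targetSize.and (eventually_half_le_blockCount (by linarith) d))))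
  refine ⟨1 / 2, A, by norm_num, by linarith, N, fun n hn => ?_⟩
  obtain ⟨hP, hsn, hs, hm⟩ := hN n hn
  have hV : #(Icc (targetSize n + 1) n) = n - targetSize n := by rw [Nat.card_Icc]; omega
  obtain ⟨P, hPS, hcard, hcover⟩ := hP (Icc (targetSize n + 1) n) (by omega) (by omega)
  have hT_le : (transversalNumber n P + targetSize n : ℝ) ≤ n :=
    mod_cast hPS.transversalNumber_add_le (by omega)
  have hT_ge : (n : ℝ) ≤ transversalNumber n P + 2 * targetSize n :=
    mod_cast hPS.le_transversalNumber_add hcover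
  have hAx : 2 * (√n * Real.log n) ≤ A * (√n * Real.log n) := by gcongr
  refine ⟨P, fun e he => ⟨?_, hPS.card_eq he⟩,
    fun G hG e₁ h₁ e₂ h₂ => hPS.eq_of_subset h₁ h₂ hG, ?_, ?_, ?_, ?_⟩
  · exact (mem_powersetCard.1 (hPS.subset_powersetCard he)).1.trans
      (Icc_subset_Icc_left (by omega))
  · rw [natCast_rpow_half_add_one, hcard]
    refine le_trans ?_ hm
    rw [mul_div_assoc, mul_div_assoc, mul_div_right_comm]
    gcongr
    linarith
  · rw [natCast_rpow_half_add_one, hcard]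
    exact blockCount_le (by linarith) d n
  · linarith [targetSize_le n, mul_assoc A √n (Real.log n)]
  · linarith [mul_assoc (1 / 2) √n (Real.log n)]

end

theorem stmt_9 (k : ℕ) (hk : 2 ≤ k) :
    ∃ c C : ℝ, 0 < c ∧ 0 < C ∧ ∃ N : ℕ, ∀ n : ℕ, N ≤ n →
      ∃ P : Finset (Finset ℕ),
        (∀ e ∈ P, e ⊆ Finset.Icc 1 n ∧ e.card = 2 * k) ∧
        (∀ G : Finset ℕ, G.card = 2 * k - 1 →
          ∀ e₁ ∈ P, ∀ e₂ ∈ P, ∀ e₃ ∈ P, G ⊆ e₁ → G ⊆ e₂ → G ⊆ e₃ →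
            e₁ = e₂ ∨ e₁ = e₃ ∨ e₂ = e₃) ∧
        c * (n : ℝ) ^ ((k : ℝ) + 1 / 2) / Real.log n ≤ (P.card : ℝ) ∧
        (P.card : ℝ) ≤ C * (n : ℝ) ^ ((k : ℝ) + 1 / 2) / Real.log n ∧
        (n : ℝ) - C * Real.sqrt n * Real.log n ≤ (transversalNumber n P : ℝ) ∧
        (transversalNumber n P : ℝ) ≤ (n : ℝ) - c * Real.sqrt n * Real.log n := by
  obtain ⟨c, C, hc, hC, N, hN⟩ := stmt_9_general (2 * k - 1) (by omega)
  refine ⟨c, C, hc, hC, N, fun n hn => ?_⟩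
  obtain ⟨P, hmem, hinter, hcount⟩ := hN n hn
  have hexp : ((2 * k - 1 : ℕ) : ℝ) / 2 + 1 = k + 1 / 2 := by
    rw [Nat.cast_sub (by omega)]
    push_cast
    ring
  rw [hexp] at hcount
  rw [Nat.sub_add_cancel (by omega)] at hmem
  exact ⟨P, hmem, fun G hG e₁ h₁ e₂ h₂ _ _ hG₁ hG₂ _ => Or.inl (hinter G hG e₁ h₁ e₂ h₂ hG₁ hG₂),
    hcount⟩
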